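/- arXiv:1710.00793 — 4 statements merged into one kernel-verified Lean document; each statement's English description precedes it below -/
import Mathlib

section
/- Let Q be a quadratic form on 𝔽₂ⁿ whose radical R = rad(𝔽₂ⁿ) is nontrivial, and suppose Q has trivial kernel on R (i.e. Q(v) ≠ 0 for every nonzero v ∈ R). Fix a decomposition 𝔽₂ⁿ = V ⊕ R with B nondegenerate on V and let p_R : 𝔽₂ⁿ → R be the corresponding projection. Then for every totally singular subspace W of 𝔽₂ⁿ there exists a totally singular subspace W′ with |W′| = |W| such that W ∩ W′ ⊆ span{u} for some u ∈ 𝔽₂ⁿ with p_R(u) ≠ 0. -/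
/-!
A subspace `W'` meeting `W^⊥` trivially also meets `W` trivially, since a totally singular `W`
lies in `W^⊥`. Such a totally singular `W'` is built one dimension at a time up to `dim W`
(`exists_totallySingular_of_le`). While `dim W' < dim W`, some nonzero `w ∈ W` is orthogonal to
`W'`. It does not lie in `W' + R`: otherwise its `W'`-component would be in `W^⊥`, hence zero,
and `w` would be a nonzero singular radical vector. So some `v` satisfies `v ⊥ W'` and
`B(v, w) = 1`, and adding to `v` a radical vector `r` with `Q r = 1` if necessary makes `v`
singular. Then `W' + ⟨v⟩` is again totally singular and meets `W^⊥` trivially, because `w`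
detects the `v`-component.

The intersection `W ∩ W'` is therefore zero, and any nonzero radical vector serves as `u`.
-/

noncomputable section

/-- The radical of the bilinear form associated to a quadratic form `Q` on `𝔽₂ⁿ`:
`rad(𝔽₂ⁿ) = {v | B(v,w) = 0 for all w}` where `B(u,v) = Q(u+v) + Q(u) + Q(v)`. -/
def radical {n : ℕ} (Q : QuadraticForm (ZMod 2) (Fin n → ZMod 2)) :
    Submodule (ZMod 2) (Fin n → ZMod 2) :=
  LinearMap.ker (QuadraticMap.polarBilin Q)

/-- The orthogonal set `T^⊥ = {v | B(v,t) = 0 for all t ∈ T}` of a subset `T ⊆ 𝔽₂ⁿ`. -/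
def perpSet {n : ℕ} (Q : QuadraticForm (ZMod 2) (Fin n → ZMod 2))
    (T : Set (Fin n → ZMod 2)) : Set (Fin n → ZMod 2) :=
  {v | ∀ t ∈ T, QuadraticMap.polarBilin Q v t = 0}

/-- If `w ∉ W' + R`, then `B(·, w)` is not a combination of the functionals `B(·, w')` with
`w' ∈ W'`, so it is nonzero somewhere on `W'^⊥`. -/
lemma exists_perp_polar_ne_zero {n : ℕ} (Q : QuadraticForm (ZMod 2) (Fin n → ZMod 2))
    (W' : Submodule (ZMod 2) (Fin n → ZMod 2)) (w : Fin n → ZMod 2)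
    (hw : ∀ w' ∈ W', w - w' ∉ radical Q) :
    ∃ v, (∀ w' ∈ W', Q.polarBilin w' v = 0) ∧ Q.polarBilin w v ≠ 0 := by
  by_contra! h
  have hmem : Q.polarBilin w ∈
      (W'.map Q.polarBilin).dualCoannihilator.dualAnnihilator := by
    rw [Submodule.mem_dualAnnihilator]
    intro v hv
    rw [Submodule.mem_dualCoannihilator] at hv
    exact h v fun w' hw' => hv _ (Submodule.mem_map_of_mem hw')
  rw [Subspace.dualCoannihilator_dualAnnihilator_eq] at hmem
  obtain ⟨w', hw', he⟩ := hmem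
  exact hw w' hw' (by rw [radical, LinearMap.mem_ker, map_sub, he, sub_self])

/-- The inductive construction: in each dimension `k ≤ dim W` there is a totally singular subspace
meeting `W^⊥` trivially. Triviality against `W^⊥`, rather than against `W`, is what allows the
subspace to be enlarged. -/
lemma exists_totallySingular_of_le {n : ℕ} (Q : QuadraticForm (ZMod 2) (Fin n → ZMod 2))
    (hker : ∀ v ∈ radical Q, v ≠ 0 → Q v ≠ 0)
    (r : Fin n → ZMod 2) (hr : r ∈ radical Q) (hQr : Q r = 1)
    (W : Submodule (ZMod 2) (Fin n → ZMod 2)) (hW : ∀ v ∈ W, Q v = 0) (k : ℕ)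
    (hk : k ≤ Module.finrank (ZMod 2) W) :
    ∃ W' : Submodule (ZMod 2) (Fin n → ZMod 2), (∀ v ∈ W', Q v = 0) ∧
      Module.finrank (ZMod 2) W' = k ∧
      ∀ x ∈ W', (∀ w ∈ W, Q.polarBilin x w = 0) → x = 0 := by
  have hcomm : ∀ x y, Q.polarBilin x y = Q.polarBilin y x := fun x y => by
    simp only [QuadraticMap.polarBilin_apply_apply]
    exact QuadraticMap.polar_comm Q x y
  have hadd : ∀ x y, Q (x + y) = Q x + Q y + Q.polarBilin x y := fun x y => by
    simp only [QuadraticMap.polarBilin_apply_apply]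
    exact QuadraticMap.map_add Q x y
  have hrad : ∀ x ∈ radical Q, ∀ y, Q.polarBilin x y = 0 := fun x hx y => by
    rw [radical, LinearMap.mem_ker] at hx
    rw [hx, LinearMap.zero_apply]
  have hWW : ∀ x ∈ W, ∀ y ∈ W, Q.polarBilin x y = 0 := fun x hx y hy => by
    have := hadd x y
    rw [hW _ (W.add_mem hx hy), hW x hx, hW y hy] at this
    simpa using this.symm
  have h01 : ∀ a : ZMod 2, a ≠ 0 → a = 1 := by decide
  induction k with
  | zero => exact ⟨⊥, by simp, by simp, by simp⟩
  | succ k ih =>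
    obtain ⟨W', hs, hd, hp⟩ := ih (by omega)
    -- `dim W' < dim W`, so the pairing `W → Dual W'` has a nonzero kernel vector.
    obtain ⟨w, hwW, hw0, hwperp⟩ : ∃ w ∈ W, w ≠ 0 ∧ ∀ x ∈ W', Q.polarBilin w x = 0 := by
      let f : W →ₗ[ZMod 2] Module.Dual (ZMod 2) W' :=
        (W'.subtype.dualMap ∘ₗ Q.polarBilin) ∘ₗ W.subtype
      have hf : LinearMap.ker f ≠ ⊥ := by
        apply LinearMap.ker_ne_bot_of_finrank_lt
        rw [Subspace.dual_finrank_eq, hd]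
        omega
      obtain ⟨w, hw, hw0⟩ := Submodule.exists_mem_ne_zero_of_ne_bot hf
      refine ⟨w, w.2, by simpa using hw0, fun x hx => ?_⟩
      exact LinearMap.congr_fun (LinearMap.mem_ker.1 hw) ⟨x, hx⟩
    obtain ⟨v₀, hv₀, hwv₀⟩ := exists_perp_polar_ne_zero Q W' w (by
      intro w' hw' hmem
      have h0 : w' = 0 := hp w' hw' fun y hy => by
        have := hrad _ hmem y
        rw [map_sub, LinearMap.sub_apply, hWW w hwW y hy] at this
        simpa using this
      subst h0
      rw [sub_zero] at hmem
      exact hker w hmem hw0 (hW w hwW))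
    obtain ⟨v, hv, hwv, hQv⟩ : ∃ v, (∀ w' ∈ W', Q.polarBilin w' v = 0) ∧
        Q.polarBilin w v ≠ 0 ∧ Q v = 0 := by
      by_cases h : Q v₀ = 0
      · exact ⟨v₀, hv₀, hwv₀, h⟩
      · have hz : ∀ x, Q.polarBilin x r = 0 := fun x => by rw [hcomm, hrad r hr]
        refine ⟨v₀ + r, fun w' hw' => ?_, ?_, ?_⟩
        · rw [map_add, hv₀ w' hw', hz, add_zero]
        · rwa [map_add, hz, add_zero]
        · rw [hadd, h01 _ h, hQr, hz]
          decide
    have hvW' : v ∉ W' := fun h => hwv (hwperp v h)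
    refine ⟨W' ⊔ Submodule.span (ZMod 2) {v}, ?_, ?_, ?_⟩
    · intro x hx
      obtain ⟨y, hy, z, hz, rfl⟩ := Submodule.mem_sup.1 hx
      obtain ⟨c, rfl⟩ := Submodule.mem_span_singleton.1 hz
      rw [hadd, hs y hy, QuadraticMap.map_smul, hQv, map_smul, hv y hy]
      simp
    · rw [Submodule.finrank_sup_span_singleton hvW', hd]
    · intro x hx hxW
      obtain ⟨y, hy, z, hz, rfl⟩ := Submodule.mem_sup.1 hx
      obtain ⟨c, rfl⟩ := Submodule.mem_span_singleton.1 hz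
      have hc : c = 0 := by
        have := hxW w hwW
        rw [hcomm, map_add, hwperp y hy, map_smul, zero_add, smul_eq_mul] at this
        exact (mul_eq_zero.1 this).resolve_right hwv
      subst hc
      rw [zero_smul, add_zero] at hxW ⊢
      exact hp y hy hxW

/-- Let `Q` be a quadratic form on `𝔽₂ⁿ` with nontrivial radical `R` on which `Q` has trivial
kernel.  Fix a decomposition `𝔽₂ⁿ = V ⊕ R` with `B` nondegenerate on `V`.  Then for every
totally singular subspace `W` there is a totally singular subspace `W'` with `|W'| = |W|` and
`W ∩ W' ⊆ span{u}` for some `u` with `p_R(u) ≠ 0`. -/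
theorem exists_totallySingular_complement {n : ℕ}
    (Q : QuadraticForm (ZMod 2) (Fin n → ZMod 2))
    (hradne : radical Q ≠ ⊥)
    (hker : ∀ v ∈ radical Q, v ≠ 0 → Q v ≠ 0)
    (V : Submodule (ZMod 2) (Fin n → ZMod 2))
    (hcompl : IsCompl V (radical Q))
    (hnondeg : ∀ x ∈ V, (∀ y ∈ V, QuadraticMap.polarBilin Q x y = 0) → x = 0)
    (W : Submodule (ZMod 2) (Fin n → ZMod 2)) (hW : ∀ v ∈ W, Q v = 0) :
    ∃ W' : Submodule (ZMod 2) (Fin n → ZMod 2), (∀ v ∈ W', Q v = 0) ∧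
      Nat.card W' = Nat.card W ∧
      ∃ u : Fin n → ZMod 2,
        (radical Q).linearProjOfIsCompl V hcompl.symm u ≠ 0 ∧
        W ⊓ W' ≤ Submodule.span (ZMod 2) {u} := by
  obtain ⟨r, hr, hr0⟩ := Submodule.exists_mem_ne_zero_of_ne_bot hradne
  have h01 : ∀ a : ZMod 2, a ≠ 0 → a = 1 := by decide
  obtain ⟨W', hs, hd, hp⟩ := exists_totallySingular_of_le Q hker r hr
    (h01 _ (hker r hr hr0)) W hW _ le_rfl
  refine ⟨W', hs, Nat.card_congr (LinearEquiv.ofFinrankEq W' W hd).toEquiv, r, ?_, ?_⟩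
  · intro h
    have hproj := Submodule.projectionOnto_apply_left hcompl.symm ⟨r, hr⟩
    exact hr0 (congrArg Subtype.val (hproj.symm.trans h))
  · rintro x ⟨hxW, hxW'⟩
    have hx : x = 0 := hp x hxW' fun w hw => by
      rw [QuadraticMap.polarBilin_apply_apply, QuadraticMap.polar, hW _ (W.add_mem hxW hw),
        hW x hxW, hW w hw]
      simp
    rw [hx]
    exact Submodule.zero_mem _

end
end

section
/- Let Q be a quadratic form on 𝔽₂ⁿ with trivial kernel on the radical, i.e. Q(v) ≠ 0 for every nonzero v ∈ rad(𝔽₂ⁿ). Let H ⊂ 𝔽₂ⁿ be a subspace of index 2, let S = (ker Q) ∖ H, and suppose S spans 𝔽₂ⁿ. Then for every subset T ⊆ S one has |T^⊥ ∩ T| ≤ |S| − |T|. -/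
/-!
Put `R = T^⊥ ∩ T` and `U = span R`. Since `R` consists of pairwise orthogonal singular vectors,
`U` is totally singular, and `T ⊆ U^⊥`; hence it suffices to find `|R|` elements of `S \ U^⊥`.
Fixing `r₀ ∈ R`, translation by `r₀` embeds `R` into `K = U ∩ H`, so `|K|` elements are enough.

For `s ∈ S \ U^⊥` and `x ∈ K` one has `Q (s + x) = B(s, x)`, so `s + x ∈ S \ U^⊥` as soon as
`B(s, x) = 0`. If some `s` is orthogonal to all of `K`, the coset `s + K` does the job. Otherwise
each `s` contributes `|K| / 2` elements (`card_le_two_mul_card_ker`), and two such `s`, `s₁` with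
`B(s, u) ≠ B(s₁, u)` for some `u ∈ U` contribute disjoint families. They exist: `U` contains a
nonzero `u` orthogonal to `s`; as `u` is singular it is not in the radical, and since `S` spans,
some `s₁ ∈ S` satisfies `B(u, s₁) ≠ 0`.
-/

noncomputable section

/-- A functional on a finite `𝔽₂`-space that does not vanish identically has a kernel of at least
half the size: translation by a vector off the kernel maps the complement into the kernel. -/
lemma card_le_two_mul_card_ker {V : Type*} [AddCommGroup V] [Module (ZMod 2) V] [Finite V]
    (K : Submodule (ZMod 2) V) (f : V →ₗ[ZMod 2] ZMod 2) (k : V) (hk : k ∈ K) (hfk : f k ≠ 0) :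
    (K : Set V).ncard ≤ 2 * {x | x ∈ K ∧ f x = 0}.ncard := by
  have hsplit : (K : Set V) = {x | x ∈ K ∧ f x = 0} ∪ {x | x ∈ K ∧ f x ≠ 0} := by
    ext x
    simp only [SetLike.mem_coe, Set.mem_union, Set.mem_ofPred_eq]
    tauto
  have hle : {x | x ∈ K ∧ f x ≠ 0}.ncard ≤ {x | x ∈ K ∧ f x = 0}.ncard := by
    apply Set.ncard_le_ncard_of_injOn (fun x => x + k)
    · rintro x ⟨hx, hfx⟩
      refine ⟨K.add_mem hx hk, ?_⟩
      rw [map_add]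
      generalize f x = a at *
      generalize f k = b at *
      revert a b
      decide
    · intro x _ y _ hxy
      exact add_right_cancel hxy
  have := Set.ncard_union_le {x | x ∈ K ∧ f x = 0} {x | x ∈ K ∧ f x ≠ 0}
  rw [← hsplit] at this
  omega

/-- Let `Q` be a quadratic form on `𝔽₂ⁿ` with trivial kernel on the radical, `H` a subspace
of index 2, and `S = (ker Q) ∖ H` a spanning set.  Then for every subset `T ⊆ S` one has
`|T^⊥ ∩ T| ≤ |S| − |T|`. -/
theorem perp_inter_card_le {n : ℕ}
    (Q : QuadraticForm (ZMod 2) (Fin n → ZMod 2))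
    (hker : ∀ v ∈ radical Q, v ≠ 0 → Q v ≠ 0)
    (H : Submodule (ZMod 2) (Fin n → ZMod 2))
    (hH : Nat.card ((Fin n → ZMod 2) ⧸ H) = 2)
    (S : Set (Fin n → ZMod 2)) (hS : S = {v | Q v = 0} \ H)
    (hspan : Submodule.span (ZMod 2) S = ⊤)
    (T : Set (Fin n → ZMod 2)) (hT : T ⊆ S) :
    (perpSet Q T ∩ T).ncard ≤ S.ncard - T.ncard := by
  classical
  rw [← Set.ncard_sdiff hT]
  set B := QuadraticMap.polarBilin Q with hB
  have hsymm : ∀ x y, B x y = B y x := fun x y => QuadraticMap.polar_comm Q x y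
  have hQadd : ∀ x y, Q (x + y) = Q x + Q y + B x y := fun x y => QuadraticMap.map_add Q x y
  obtain hR | ⟨r₀, hr₀⟩ := (perpSet Q T ∩ T).eq_empty_or_nonempty
  · simp [hR]
  have hTS : ∀ t ∈ T, Q t = 0 ∧ t ∉ H := by
    intro t ht
    have := hT ht
    rw [hS] at this
    exact this
  set U := Submodule.span (ZMod 2) (perpSet Q T ∩ T) with hU
  have hUT : ∀ u ∈ U, ∀ t ∈ T, B u t = 0 := by
    intro u hu t ht
    have hle : U ≤ LinearMap.ker (B.flip t) := Submodule.span_le.2 fun r hr => hr.1 t ht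
    exact hle hu
  have hUU : ∀ u ∈ U, ∀ v ∈ U, B u v = 0 := by
    intro u hu v hv
    have hle : U ≤ LinearMap.ker (B u) := Submodule.span_le.2 fun r hr => hUT u hu r hr.2
    exact hle hv
  have hUQ : ∀ u ∈ U, Q u = 0 := by
    intro u hu
    induction hu using Submodule.span_induction with
    | mem x hx => exact (hTS x hx.2).1
    | zero => exact QuadraticMap.map_zero Q
    | add x y hx hy h1 h2 => rw [hQadd, h1, h2, hUU x hx y hy]; simp
    | smul a x hx h => rw [QuadraticMap.map_smul, h, smul_zero]
  have hindex : ∀ a b, a ∉ H → b ∉ H → a + b ∈ H := by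
    intro a b ha hb
    have h2 : H.toAddSubgroup.index = 2 := hH
    have := AddSubgroup.add_mem_iff_of_index_two h2 (a := a) (b := b)
    simp only [Submodule.mem_toAddSubgroup] at this
    tauto
  have hr₀U : r₀ ∈ U := Submodule.subset_span hr₀
  have hr₀H : r₀ ∉ H := (hTS r₀ hr₀.2).2
  set K := U ⊓ H with hK
  have hRK : (perpSet Q T ∩ T).ncard ≤ (K : Set (Fin n → ZMod 2)).ncard := by
    apply Set.ncard_le_ncard_of_injOn (fun r => r + r₀)
    · intro r hr
      exact ⟨U.add_mem (Submodule.subset_span hr) hr₀U, hindex _ _ (hTS r hr.2).2 hr₀H⟩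
    · intro x _ y _ hxy
      exact add_right_cancel hxy
  refine hRK.trans ?_
  have hshift : ∀ s ∈ S, ∀ u ∈ U, B u s ≠ 0 → ∀ x ∈ K, B s x = 0 → s + x ∈ S \ T := by
    intro s hs u hu hus x hx hsx
    rw [hS] at hs ⊢
    refine ⟨⟨?_, ?_⟩, ?_⟩
    · change Q (s + x) = 0
      rw [hQadd, hs.1, hUQ x hx.1, hsx]
      simp
    · intro h
      exact hs.2 ((H.add_mem_iff_left hx.2).1 h)
    · intro h
      apply hus
      have := hUT u hu _ h
      rwa [map_add, hUU u hu x hx.1, add_zero] at this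
  have hdetect : ∀ u ∈ U, u ≠ 0 → ∃ s ∈ S, B u s ≠ 0 := by
    intro u hu hu0
    by_contra! hcon
    refine hker u ?_ hu0 (hUQ u hu)
    have hle : Submodule.span (ZMod 2) S ≤ LinearMap.ker (B u) := Submodule.span_le.2 hcon
    rw [hspan] at hle
    exact LinearMap.ker_eq_top.1 (top_le_iff.1 hle)
  have hr₀0 : r₀ ≠ 0 := fun h => hr₀H (h ▸ H.zero_mem)
  by_cases hcase : ∃ s ∈ S, (∃ u ∈ U, B u s ≠ 0) ∧ ∀ x ∈ K, B s x = 0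
  · obtain ⟨s, hs, ⟨u, hu, hus⟩, hsK⟩ := hcase
    apply Set.ncard_le_ncard_of_injOn (fun x => s + x)
    · intro x hx
      exact hshift s hs u hu hus x hx (hsK x hx)
    · intro x _ y _ hxy
      exact add_left_cancel hxy
  · push Not at hcase
    obtain ⟨s, hs, hr₀s⟩ := hdetect r₀ hr₀U hr₀0
    obtain ⟨k, hk, hsk⟩ := hcase s hs ⟨r₀, hr₀U, hr₀s⟩
    -- In `𝔽₂` both `B(s, r₀)` and `B(s, k)` equal `1`, so `u = r₀ + k` is orthogonal to `s`;
    -- it is nonzero because `r₀ ∉ H` and `k ∈ H`.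
    have hu : r₀ + k ∈ U := U.add_mem hr₀U hk.1
    have hu0 : r₀ + k ≠ 0 := by
      intro h
      apply hr₀H
      rw [← H.add_mem_iff_left hk.2, h]
      exact H.zero_mem
    have hsu : B (r₀ + k) s = 0 := by
      rw [hsymm, map_add, hsymm s r₀]
      generalize B r₀ s = a at *
      generalize B s k = b at *
      revert a b
      decide
    obtain ⟨s₁, hs₁, hus₁⟩ := hdetect _ hu hu0
    obtain ⟨k₁, hk₁, hsk₁⟩ := hcase s₁ hs₁ ⟨_, hu, hus₁⟩
    have h1 := card_le_two_mul_card_ker K (B s) k hk hsk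
    have h2 := card_le_two_mul_card_ker K (B s₁) k₁ hk₁ hsk₁
    set A := (fun x => s + x) '' {x | x ∈ K ∧ B s x = 0} with hA
    set A₁ := (fun x => s₁ + x) '' {x | x ∈ K ∧ B s₁ x = 0} with hA₁
    have hAc : A.ncard = {x | x ∈ K ∧ B s x = 0}.ncard :=
      Set.ncard_image_of_injective _ (add_right_injective s)
    have hAc₁ : A₁.ncard = {x | x ∈ K ∧ B s₁ x = 0}.ncard :=
      Set.ncard_image_of_injective _ (add_right_injective s₁)
    -- The functional `B(r₀ + k, ·)` is `0` on `A` and `1` on `A₁`.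
    have hdisj : Disjoint A A₁ := by
      rw [Set.disjoint_left]
      rintro _ ⟨x, hx, rfl⟩ ⟨y, hy, hxy⟩
      apply hus₁
      have := congrArg (B (r₀ + k)) hxy
      simp only [] at this
      rwa [map_add (B (r₀ + k)), map_add (B (r₀ + k)), hUU _ hu x hx.1.1, hUU _ hu y hy.1.1, hsu,
        add_zero, add_zero] at this
    have hsub : A ∪ A₁ ⊆ S \ T := by
      rintro _ (⟨x, hx, rfl⟩ | ⟨x, hx, rfl⟩)
      · exact hshift s hs r₀ hr₀U hr₀s x hx.1 hx.2
      · exact hshift s₁ hs₁ _ hu hus₁ x hx.1 hx.2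
    have h3 := Set.ncard_le_ncard hsub
    rw [Set.ncard_union_eq hdisj] at h3
    omega

end
end

section
/- Let Q be a quadratic form on 𝔽₂ⁿ, let H ⊂ 𝔽₂ⁿ be a subspace of index 2, let S = (ker Q) ∖ H, and suppose S spans 𝔽₂ⁿ. Then for every subset T ⊆ S satisfying T ∩ ker(Q|_{rad(𝔽₂ⁿ)}) = ∅ (i.e. T contains no element of the radical on which Q vanishes), one has |T^⊥ ∩ T| ≤ |S| − |T|. -/
/-!
Put `U = T^⊥ ∩ T`. Its elements are singular, pairwise orthogonal, and orthogonal to `T`, so any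
`s ∈ S` with `B(s,u) ≠ 0` for some `u ∈ U` lies in `S \ T`, together with its whole pairing class
(the elements of `S` inducing the same function `B(s,·)` on `U`). For `u, u₀ ∈ U` with
`B(s,u) = B(s,u₀)`, the vector `s + u + u₀` is again singular and outside `H`, and lies in the
class of `s`; hence that class is at least as large as each fibre of `B(s,·)` on `U`, and in
particular has at least `|U| / 2` elements.

If two elements of `S` induce different nonzero functions on `U`, their classes are disjoint
subsets of `S \ T`, of total size at least `|U|`. Otherwise there is at most one nonzero function.
Since `S` spans and no element of `U` is in the radical, each `u ∈ U` pairs nontrivially with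
some element of `S`, so this function is constantly `1` on `U`, and its single class already has
at least `|U|` elements.
-/

noncomputable section

/-- The elements of `S` pairing with every `u ∈ U` in the same way as `s`. -/
def pairingClass {n : ℕ} (Q : QuadraticForm (ZMod 2) (Fin n → ZMod 2))
    (S U : Set (Fin n → ZMod 2)) (s : Fin n → ZMod 2) : Set (Fin n → ZMod 2) :=
  {x ∈ S | ∀ u ∈ U, QuadraticMap.polarBilin Q x u = QuadraticMap.polarBilin Q s u}

/-- If `u₀ ∈ U` satisfies `B(s,u₀) = c`, then `u ↦ s + (u + u₀)` injects the set
`{u ∈ U | B(s,u) = c}` into the pairing class of `s`. -/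
lemma ncard_fiber_le_pairingClass {n : ℕ}
    (Q : QuadraticForm (ZMod 2) (Fin n → ZMod 2))
    (H : Submodule (ZMod 2) (Fin n → ZMod 2))
    (hH : Nat.card ((Fin n → ZMod 2) ⧸ H) = 2)
    (U : Set (Fin n → ZMod 2)) (hU : U ⊆ {v | Q v = 0} \ H)
    (horth : ∀ u ∈ U, ∀ v ∈ U, QuadraticMap.polarBilin Q u v = 0)
    (s : Fin n → ZMod 2) (hs : s ∈ {v | Q v = 0} \ (H : Set (Fin n → ZMod 2)))
    (c : ZMod 2) :
    {u ∈ U | QuadraticMap.polarBilin Q s u = c}.ncard ≤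
      (pairingClass Q ({v | Q v = 0} \ H) U s).ncard := by
  rcases Set.eq_empty_or_nonempty {u ∈ U | QuadraticMap.polarBilin Q s u = c} with h | h
  · rw [h, Set.ncard_empty]
    exact Nat.zero_le _
  obtain ⟨u₀, hu₀, hc₀⟩ := h
  have hidx : H.toAddSubgroup.index = 2 := hH
  have hadd : ∀ x y, x + y ∈ H ↔ (x ∈ H ↔ y ∈ H) := fun x y =>
    AddSubgroup.add_mem_iff_of_index_two hidx (a := x) (b := y)
  have hQ : ∀ x y, Q (x + y) = Q x + Q y + QuadraticMap.polarBilin Q x y := fun x y => by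
    simp [QuadraticMap.polar]
  refine Set.ncard_le_ncard_of_injOn (fun u => s + (u + u₀)) ?_ ?_ (Set.toFinite _)
  · rintro u ⟨hu, hc⟩
    obtain ⟨hQu, hHu⟩ := hU hu
    obtain ⟨hQu₀, hHu₀⟩ := hU hu₀
    obtain ⟨hQs, hHs⟩ := hs
    simp only [Set.mem_ofPred_eq, SetLike.mem_coe] at hQu hHu hQu₀ hHu₀ hQs hHs
    refine ⟨⟨?_, ?_⟩, ?_⟩
    · simp only [Set.mem_ofPred_eq]
      rw [hQ, hQ u u₀, map_add, hc, hc₀, hQu, hQu₀, hQs, horth u hu u₀ hu₀]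
      simp [CharTwo.add_self_eq_zero]
    · simp only [SetLike.mem_coe]
      rw [hadd, hadd]
      tauto
    · intro v hv
      rw [map_add, map_add, LinearMap.add_apply, LinearMap.add_apply,
        horth u hu v hv, horth u₀ hu₀ v hv]
      simp
  · intro u _ v _ huv
    simpa using huv

/-- One of the two fibres of `B(s,·)` on `U` contains at least half of `U`. -/
lemma ncard_le_two_mul_pairingClass {n : ℕ}
    (Q : QuadraticForm (ZMod 2) (Fin n → ZMod 2))
    (H : Submodule (ZMod 2) (Fin n → ZMod 2))
    (hH : Nat.card ((Fin n → ZMod 2) ⧸ H) = 2)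
    (U : Set (Fin n → ZMod 2)) (hU : U ⊆ {v | Q v = 0} \ H)
    (horth : ∀ u ∈ U, ∀ v ∈ U, QuadraticMap.polarBilin Q u v = 0)
    (s : Fin n → ZMod 2) (hs : s ∈ {v | Q v = 0} \ (H : Set (Fin n → ZMod 2))) :
    U.ncard ≤ 2 * (pairingClass Q ({v | Q v = 0} \ H) U s).ncard := by
  have h0 := ncard_fiber_le_pairingClass Q H hH U hU horth s hs 0
  have h1 := ncard_fiber_le_pairingClass Q H hH U hU horth s hs 1
  have hcover : U ⊆ {u ∈ U | QuadraticMap.polarBilin Q s u = 0} ∪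
      {u ∈ U | QuadraticMap.polarBilin Q s u = 1} := by
    intro u hu
    have h2 : ∀ a : ZMod 2, a = 0 ∨ a = 1 := by decide
    rcases h2 (QuadraticMap.polarBilin Q s u) with h | h
    · exact Or.inl ⟨hu, h⟩
    · exact Or.inr ⟨hu, h⟩
  have h3 := Set.ncard_le_ncard hcover (Set.toFinite _)
  have h4 := Set.ncard_union_le {u ∈ U | QuadraticMap.polarBilin Q s u = 0}
    {u ∈ U | QuadraticMap.polarBilin Q s u = 1}
  omega

/-- Let `Q` be a quadratic form on `𝔽₂ⁿ`, `H` a subspace of index 2, and `S = (ker Q) ∖ H`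
a spanning set.  Then for every subset `T ⊆ S` containing no element of the radical on which
`Q` vanishes, one has `|T^⊥ ∩ T| ≤ |S| − |T|`. -/
theorem perp_inter_card_le_of_disjoint_radicalKer {n : ℕ}
    (Q : QuadraticForm (ZMod 2) (Fin n → ZMod 2))
    (H : Submodule (ZMod 2) (Fin n → ZMod 2))
    (hH : Nat.card ((Fin n → ZMod 2) ⧸ H) = 2)
    (S : Set (Fin n → ZMod 2)) (hS : S = {v | Q v = 0} \ H)
    (hspan : Submodule.span (ZMod 2) S = ⊤)
    (T : Set (Fin n → ZMod 2)) (hT : T ⊆ S)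
    (hTrad : T ∩ {v ∈ (radical Q : Set (Fin n → ZMod 2)) | Q v = 0} = ∅) :
    (perpSet Q T ∩ T).ncard ≤ S.ncard - T.ncard := by
  subst hS
  rw [← Set.ncard_sdiff hT (Set.toFinite _)]
  set U := perpSet Q T ∩ T with hUdef
  have hU : U ⊆ {v | Q v = 0} \ H := fun u hu => hT hu.2
  have hsymm : ∀ x y, QuadraticMap.polarBilin Q x y = QuadraticMap.polarBilin Q y x :=
    fun x y => by simp [QuadraticMap.polar_comm]
  have horth : ∀ u ∈ U, ∀ v ∈ U, QuadraticMap.polarBilin Q u v = 0 :=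
    fun u hu v hv => hu.1 v hv.2
  have hne : ∀ u ∈ U, ∃ s ∈ {v | Q v = 0} \ (H : Set (Fin n → ZMod 2)),
      QuadraticMap.polarBilin Q s u ≠ 0 := by
    intro u hu
    by_contra! hcon
    have hrad : QuadraticMap.polarBilin Q u = 0 :=
      LinearMap.ext_on hspan fun s hs => by
        rw [hsymm, hcon s hs, LinearMap.zero_apply]
    have hmem : u ∈ T ∩ {v ∈ (radical Q : Set (Fin n → ZMod 2)) | Q v = 0} :=
      ⟨hu.2, LinearMap.mem_ker.2 hrad, (hT hu.2).1⟩
    rw [hTrad] at hmem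
    exact hmem
  have hclass : ∀ s, (∃ u ∈ U, QuadraticMap.polarBilin Q s u ≠ 0) →
      pairingClass Q ({v | Q v = 0} \ H) U s ⊆ ({v | Q v = 0} \ H) \ T := by
    rintro s ⟨u, hu, hsu⟩ x ⟨hxS, hx⟩
    refine ⟨hxS, fun hxT => hsu ?_⟩
    rw [← hx u hu, hsymm]
    exact hu.1 x hxT
  rcases Set.eq_empty_or_nonempty U with hemp | ⟨u₀, hu₀⟩
  · simp [hemp]
  obtain ⟨s, hs, hsu₀⟩ := hne u₀ hu₀
  by_cases hall : ∀ u ∈ U, QuadraticMap.polarBilin Q s u = 1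
  · have h1 := ncard_fiber_le_pairingClass Q H hH U hU horth s hs 1
    have h2 : {u ∈ U | QuadraticMap.polarBilin Q s u = 1} = U :=
      Set.sep_eq_self_iff_mem_true.2 hall
    rw [h2] at h1
    exact h1.trans (Set.ncard_le_ncard (hclass s ⟨u₀, hu₀, hsu₀⟩) (Set.toFinite _))
  · push Not at hall
    obtain ⟨u₁, hu₁, hsu₁⟩ := hall
    obtain ⟨t, ht, htu₁⟩ := hne u₁ hu₁
    have hzero : QuadraticMap.polarBilin Q s u₁ = 0 := by
      have h2 : ∀ a : ZMod 2, a ≠ 1 → a = 0 := by decide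
      exact h2 _ hsu₁
    -- `B(s,u₁) = 0` while `B(t,u₁) ≠ 0`, so `s` and `t` have different pairing classes.
    have hdisj : Disjoint (pairingClass Q ({v | Q v = 0} \ H) U s)
        (pairingClass Q ({v | Q v = 0} \ H) U t) := by
      rw [Set.disjoint_left]
      rintro x ⟨_, hxs⟩ ⟨_, hxt⟩
      exact htu₁ (by rw [← hxt u₁ hu₁, hxs u₁ hu₁, hzero])
    have h1 := ncard_le_two_mul_pairingClass Q H hH U hU horth s hs
    have h2 := ncard_le_two_mul_pairingClass Q H hH U hU horth t ht
    have h3 := Set.ncard_le_ncard (Set.union_subset (hclass s ⟨u₀, hu₀, hsu₀⟩)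
      (hclass t ⟨u₁, hu₁, htu₁⟩)) (Set.toFinite _)
    rw [Set.ncard_union_eq hdisj (Set.toFinite _) (Set.toFinite _)] at h3
    omega

end
end

section
/- Let Γ be a finite simple graph with edge set E(Γ). For an edge (u,v) ∈ E(Γ), say property P(u,v) holds if there exists a vertex w that is adjacent to both u and v, or adjacent to neither u nor v. Then P(u,v) is false for all edges (u,v) ∈ E(Γ) if and only if Γ is complete bipartite, i.e. its vertex set admits a partition V = V₁ ⊔ V₂ such that two vertices are adjacent if and only if they lie in different parts. -/
/-!
If `P` fails for every edge, then every vertex is adjacent to exactly one endpoint of every edge.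
Fix any vertex `a`; the neighbourhood of `a` and its complement form the required bipartition.
Indeed, an edge `uv` has exactly one endpoint in the neighbourhood of `a`; and if `u` is a
neighbour of `a` while `v` is not, then `v` must be adjacent to the other endpoint `u` of the
edge `au`. Conversely, in a complete bipartite graph a vertex is adjacent to exactly the endpoint
of an edge lying in the part opposite to its own.
-/

/-- A graph is complete bipartite: the vertex set admits a partition `V = V₁ ⊔ V₂` such that
two vertices are adjacent if and only if they lie in different parts. -/
def IsCompleteBipartite {V : Type} (Γ : SimpleGraph V) : Prop :=
  ∃ V₁ V₂ : Set V, V₁ ∪ V₂ = Set.univ ∧ V₁ ∩ V₂ = ∅ ∧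
    ∀ u v : V, Γ.Adj u v ↔ ((u ∈ V₁ ∧ v ∈ V₂) ∨ (u ∈ V₂ ∧ v ∈ V₁))

/-- For an edge `(u,v)`, property `P(u,v)`: there is a vertex `w` adjacent to both `u` and `v`,
or adjacent to neither.  `P` fails for all edges iff the graph is complete bipartite. -/
theorem property_P_false_iff_completeBipartite {V : Type} [Fintype V] (Γ : SimpleGraph V) :
    (∀ u v : V, Γ.Adj u v →
      ¬ ∃ w : V, (Γ.Adj w u ∧ Γ.Adj w v) ∨ (¬ Γ.Adj w u ∧ ¬ Γ.Adj w v)) ↔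
    IsCompleteBipartite Γ := by
  constructor
  · intro h
    rcases isEmpty_or_nonempty V with hV | ⟨⟨a⟩⟩
    · exact ⟨∅, ∅, Subsingleton.elim _ _, Set.empty_inter _, fun u => isEmptyElim u⟩
    · refine ⟨Γ.neighborSet a, (Γ.neighborSet a)ᶜ, Set.union_compl_self _,
        Set.inter_compl_self _, fun u v => ?_⟩
      simp only [Set.mem_compl_iff, SimpleGraph.mem_neighborSet]
      constructor
      · intro huv
        have := h u v huv
        push Not at this
        have := this a
        tauto
      · rintro (⟨hu, hv⟩ | ⟨hu, hv⟩)
        · by_contra huv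
          exact h a u hu ⟨v, Or.inr ⟨fun e => hv e.symm, fun e => huv e.symm⟩⟩
        · by_contra huv
          exact h a v hv ⟨u, Or.inr ⟨fun e => hu e.symm, huv⟩⟩
  · rintro ⟨V₁, V₂, hunion, hinter, hadj⟩ u v huv ⟨w, hw⟩
    have hcover : ∀ x, x ∈ V₁ ∨ x ∈ V₂ := fun x => by
      have : x ∈ V₁ ∪ V₂ := hunion ▸ Set.mem_univ x
      exact this
    have hdisj : ∀ x, ¬ (x ∈ V₁ ∧ x ∈ V₂) := fun x hx => by
      have : x ∈ V₁ ∩ V₂ := hx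
      simp [hinter] at this
    rw [hadj] at huv
    rw [hadj w u, hadj w v] at hw
    have := hcover w
    have := hdisj u
    have := hdisj v
    have := hdisj w
    tauto
end
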